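/- C² discrete fixed point bound. Let ω be an averaging kernel with Δ-discretization ω̂ and let hf, hg : [0,1] → [0,1] be nondecreasing and twice continuously differentiable. Suppose there exist lattice functions F, G : {x_i = iΔ} → [0,1], nondecreasing in i, with limits 0 at −∞ and 1 at +∞, satisfying G(x_i) = hg((F ⊗ ω̂)(x_i)) and F(x_i) = hf((G ⊗ ω̂)(x_i)) for all i (a (0,1)-interpolating spatial fixed point of the discrete spatially coupled recursion). Then |A(hf, hg)| ≤ (1/2)·(‖hf″‖∞ + ‖hg″‖∞)·‖ω‖∞²·Δ². -/

import Mathlib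

open MeasureTheory Filter Set

noncomputable section

/-- Convolution `(f ⊗ ω)(x) = ∫ y, f y · ω (x − y)`. -/
def conv (f ω : ℝ → ℝ) (x : ℝ) : ℝ := ∫ y : ℝ, f y * ω (x - y)

/-- `ω` is an averaging kernel: even, nonnegative, of bounded variation, integrating to 1. -/
def IsAveragingKernel (ω : ℝ → ℝ) : Prop :=
  (∀ x, ω (-x) = ω x) ∧ (∀ x, 0 ≤ ω x) ∧ BoundedVariationOn ω Set.univ ∧
    MeasureTheory.Integrable ω ∧ (∫ x : ℝ, ω x) = 1

/-- The essential supremum `‖ω‖∞` of a kernel, as a real number. -/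
def kerSup (ω : ℝ → ℝ) : ℝ := (eLpNorm ω ⊤ MeasureTheory.volume).toReal

/-- `ω` is regular: for some `W ∈ (0,∞]`, it vanishes outside `[−W, W]` and is
positive on `(−W, W)` (the case `W = ∞` being that `ω` is everywhere positive). -/
def IsRegularKernel (ω : ℝ → ℝ) : Prop :=
  (∀ x, 0 < ω x) ∨
    ∃ W : ℝ, 0 < W ∧ (∀ x, W < |x| → ω x = 0) ∧ (∀ x, |x| < W → 0 < ω x)

/-- Membership in `𝒳`: nondecreasing self-maps of `[0,1]`. -/
def MemX (h : ℝ → ℝ) : Prop :=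
  MonotoneOn h (Icc 0 1) ∧ MapsTo h (Icc 0 1) (Icc 0 1)

/-- Left limit `h(u−)` of `h ∈ 𝒳` at `u ∈ [0,1]`, with the convention `h(0−) = 0`. -/
def lm (h : ℝ → ℝ) (u : ℝ) : ℝ := if u ≤ 0 then 0 else sSup (h '' Ico 0 u)

/-- Right limit `h(u+)` of `h ∈ 𝒳` at `u ∈ [0,1]`, with the convention `h(1+) = 1`. -/
def rm (h : ℝ → ℝ) (u : ℝ) : ℝ := if 1 ≤ u then 1 else sInf (h '' Ioc u 1)

/-- A canonical generalized inverse of `h ∈ 𝒳` (any valid inverse has the same integrals,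
so the potential below is unambiguous). -/
def Xinv (h : ℝ → ℝ) (v : ℝ) : ℝ := sInf ({1} ∪ {u ∈ Icc (0:ℝ) 1 | v ≤ h u})

/-- The potential `Φ(hf, hg; u, v) = ∫₀ᵘ hg⁻¹ + ∫₀ᵛ hf⁻¹ − u·v`. -/
def Pot (hf hg : ℝ → ℝ) (u v : ℝ) : ℝ :=
  (∫ x in (0:ℝ)..u, Xinv hg x) + (∫ x in (0:ℝ)..v, Xinv hf x) - u * v

/-- `A(hf, hg) = Φ(hf, hg; 1, 1)`. -/
def Agap (hf hg : ℝ → ℝ) : ℝ := Pot hf hg 1 1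

/-- `(u,v)` is a crossing point of `(hf, hg)`:
`u ∈ [hg(v−), hg(v+)]` and `v ∈ [hf(u−), hf(u+)]`. -/
def IsCrossing (hf hg : ℝ → ℝ) (u v : ℝ) : Prop :=
  u ∈ Icc (0:ℝ) 1 ∧ v ∈ Icc (0:ℝ) 1 ∧
    u ∈ Icc (lm hg v) (rm hg v) ∧ v ∈ Icc (lm hf u) (rm hf u)

/-- The strictly positive gap condition: there is a nontrivial crossing point, and every
nontrivial crossing point satisfies `Φ(hf, hg; u, v) > max {0, A(hf, hg)}`. -/
def StrictPosGap (hf hg : ℝ → ℝ) : Prop :=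
  (∃ u v, IsCrossing hf hg u v ∧ ¬(u = 0 ∧ v = 0) ∧ ¬(u = 1 ∧ v = 1)) ∧
    ∀ u v, IsCrossing hf hg u v → ¬(u = 0 ∧ v = 0) → ¬(u = 1 ∧ v = 1) →
      max 0 (Agap hf hg) < Pot hf hg u v

/-- Membership in `Ψ`: nondecreasing functions `ℝ → [0,1]`. -/
def MemPsi (f : ℝ → ℝ) : Prop := Monotone f ∧ ∀ x, f x ∈ Icc (0:ℝ) 1

/-- `f` is `(a,b)`-interpolating: limits `a` at `−∞` and `b` at `+∞`. -/
def Interpolates (f : ℝ → ℝ) (a b : ℝ) : Prop :=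
  Filter.Tendsto f Filter.atBot (nhds a) ∧ Filter.Tendsto f Filter.atTop (nhds b)

/-- The `Δ`-discretization `ω̂ᵢ = ∫_{(i−1/2)Δ}^{(i+1/2)Δ} ω(z) dz` of a kernel. -/
def dker (ω : ℝ → ℝ) (Δ : ℝ) (i : ℤ) : ℝ :=
  ∫ z in (((i : ℝ) - 1/2) * Δ)..(((i : ℝ) + 1/2) * Δ), ω z

/-- Discrete convolution `(f ⊗ ω̂)(xᵢ) = Σⱼ ω̂_{i−j} f(xⱼ)`. -/
def dconv (f : ℤ → ℝ) (ωh : ℤ → ℝ) (i : ℤ) : ℝ := ∑' j : ℤ, ωh (i - j) * f j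

/-!
Layer cake gives `A(hf, hg) = 1 - ∫ hf - ∫ hg` over `[0,1]`. Put `f = F ⊗ ω̂` and `g = G ⊗ ω̂`.
Since `F = hf ∘ g`, the trapezoidal sum of `F dg` over the nodes `g(xᵢ)` approximates `∫ hf`, and
likewise that of `G df` approximates `∫ hg`. These two sums add up to exactly `1`: `ω̂` is even, so
convolution is self-adjoint and moves from `F` to `G`, turning the sum of `G df` into that of
`g dF`, and the trapezoidal product rule `F dg + g dF = d(F g)` telescopes. Hence `A` is the sum of
the two quadrature errors; the nodes are at most `sup ω̂ ≤ ‖ω‖∞ Δ` apart, which even gives the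
constant `1/12`.
-/

open scoped Topology

/-! ### Telescoping sums over `ℤ` -/

section Telescoping

lemma sum_Ico_int_succ_sub {E : Type*} [AddCommGroup E] (s : ℤ → E) (n : ℕ) :
    ∑ i ∈ Finset.Ico (-n : ℤ) n, (s (i + 1) - s i) = s n - s (-n) := by
  simpa using congrArg Neg.neg (Finset.sum_Ico_int_sub n s)

lemma hasSum_int_sub_of_summable {E : Type*} [AddCommGroup E] [TopologicalSpace E]
    [IsTopologicalAddGroup E] [T2Space E] {s : ℤ → E} {a b : E}
    (hs : Summable fun i => s (i + 1) - s i) (ha : Tendsto s atBot (𝓝 a))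
    (hb : Tendsto s atTop (𝓝 b)) : HasSum (fun i => s (i + 1) - s i) (b - a) := by
  have hlim : Tendsto (fun n : ℕ => s n - s (-n)) atTop (𝓝 (b - a)) :=
    (hb.comp tendsto_natCast_atTop_atTop).sub
      (ha.comp (tendsto_neg_atTop_atBot.comp tendsto_natCast_atTop_atTop))
  have htsum := (hs.hasSum.comp Finset.tendsto_Ico_neg).congr (sum_Ico_int_succ_sub s)
  exact tendsto_nhds_unique htsum hlim ▸ hs.hasSum

/-- Monotone functions on the lattice `ℤ` interpolating between `a` at `-∞` and `b` at `+∞`. This is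
the lattice counterpart of `MemPsi` together with `Interpolates`; boundedness follows and is not a
field. -/
structure IsInterpolating (f : ℤ → ℝ) (a b : ℝ) : Prop where
  monotone : Monotone f
  tendsto_atBot : Tendsto f atBot (𝓝 a)
  tendsto_atTop : Tendsto f atTop (𝓝 b)

namespace IsInterpolating

variable {f : ℤ → ℝ} {a b : ℝ}

lemma mem_Icc (hf : IsInterpolating f a b) (i : ℤ) : f i ∈ Icc a b :=
  ⟨hf.monotone.le_of_tendsto hf.tendsto_atBot i, hf.monotone.ge_of_tendsto hf.tendsto_atTop i⟩

lemma le (hf : IsInterpolating f a b) : a ≤ b :=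
  (hf.mem_Icc 0).1.trans (hf.mem_Icc 0).2

lemma abs_le (hf : IsInterpolating f a b) (i : ℤ) : |f i| ≤ max |a| |b| :=
  abs_le_max_abs_abs (hf.mem_Icc i).1 (hf.mem_Icc i).2

lemma sub_nonneg (hf : IsInterpolating f a b) (i : ℤ) : 0 ≤ f (i + 1) - f i :=
  _root_.sub_nonneg.2 (hf.monotone (Int.le_add_one le_rfl))

lemma summable_sub (hf : IsInterpolating f a b) : Summable fun i => f (i + 1) - f i := by
  refine summable_of_sum_le hf.sub_nonneg (c := b - a) fun u => ?_
  obtain ⟨n, hn⟩ := (Finset.tendsto_Ico_neg (R := ℤ)).eventually_ge_atTop u |>.exists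
  calc ∑ i ∈ u, (f (i + 1) - f i)
      ≤ ∑ i ∈ Finset.Ico (-n : ℤ) n, (f (i + 1) - f i) :=
        Finset.sum_le_sum_of_subset_of_nonneg hn fun i _ _ => hf.sub_nonneg i
    _ = f n - f (-n) := sum_Ico_int_succ_sub f n
    _ ≤ b - a := sub_le_sub (hf.mem_Icc n).2 (hf.mem_Icc (-n)).1

lemma hasSum_sub (hf : IsInterpolating f a b) : HasSum (fun i => f (i + 1) - f i) (b - a) :=
  hasSum_int_sub_of_summable hf.summable_sub hf.tendsto_atBot hf.tendsto_atTop

end IsInterpolating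

end Telescoping

/-! ### Discrete convolution -/

section Convolution

variable {f w : ℤ → ℝ} {M : ℝ}

lemma summable_mul_of_abs_le {ι : Type*} {d y : ι → ℝ} (hd : Summable d) (hy : ∀ i, |y i| ≤ M) :
    Summable fun i => d i * y i :=
  (hd.norm.mul_right M).of_norm_bounded fun i => by
    rw [norm_mul]; exact mul_le_mul_of_nonneg_left (hy i) (norm_nonneg _)

lemma summable_dconv (hw : Summable w) (hf : ∀ i, |f i| ≤ M) (i : ℤ) :
    Summable fun j => w (i - j) * f j :=
  summable_mul_of_abs_le ((Equiv.subLeft i).summable_iff.2 hw) hf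

lemma dconv_eq_tsum_mul_sub (f w : ℤ → ℝ) (i : ℤ) : dconv f w i = ∑' k, w k * f (i - k) := by
  rw [dconv, ← (Equiv.subLeft i).tsum_eq]
  simp

lemma dconv_comp_add_one (f w : ℤ → ℝ) (i : ℤ) :
    dconv (fun j => f (j + 1)) w i = dconv f w (i + 1) := by
  rw [dconv, dconv, ← (Equiv.addRight (1 : ℤ)).tsum_eq fun j => w (i + 1 - j) * f j]
  simp

lemma dconv_succ_sub (hw : Summable w) (hf : ∀ i, |f i| ≤ M) (i : ℤ) :
    dconv (fun j => f (j + 1) - f j) w i = dconv f w (i + 1) - dconv f w i := by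
  rw [← dconv_comp_add_one, dconv, dconv, dconv,
    ← (summable_dconv hw (fun j => hf (j + 1)) i).tsum_sub (summable_dconv hw hf i)]
  simp only [mul_sub]

lemma dconv_add_succ (hw : Summable w) (hf : ∀ i, |f i| ≤ M) (i : ℤ) :
    dconv (fun j => f j + f (j + 1)) w i = dconv f w i + dconv f w (i + 1) := by
  rw [← dconv_comp_add_one, dconv, dconv, dconv,
    ← (summable_dconv hw hf i).tsum_add (summable_dconv hw (fun j => hf (j + 1)) i)]
  simp only [mul_add]

lemma tsum_dconv_mul_eq_tsum_mul_dconv {d y : ℤ → ℝ} (hw : Summable w)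
    (hw_even : ∀ k, w (-k) = w k) (hd : Summable d) (hy : ∀ i, |y i| ≤ M) :
    ∑' i, dconv d w i * y i = ∑' j, d j * dconv y w j := by
  have hsummable : Summable (Function.uncurry fun j i => w (i - j) * d j * y i) := by
    refine summable_mul_of_abs_le (d := fun p : ℤ × ℤ => w (p.2 - p.1) * d p.1) ?_
      fun p => hy p.2
    rw [← (Equiv.prodShear (Equiv.refl ℤ) Equiv.addRight).summable_iff]
    simpa [Function.comp_def, mul_comm] using summable_mul_of_summable_norm hd.norm hw.norm
  calc ∑' i, dconv d w i * y i
      = ∑' i, ∑' j, w (i - j) * d j * y i := by simp only [dconv, tsum_mul_right]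
    _ = ∑' j, ∑' i, w (i - j) * d j * y i := hsummable.tsum_comm
    _ = ∑' j, d j * dconv y w j := by
        refine tsum_congr fun j => ?_
        rw [dconv, ← tsum_mul_left]
        refine tsum_congr fun i => ?_
        rw [← hw_even (j - i), neg_sub]
        ring

/-- Symmetric probability weights on `ℤ`: the properties of the discretization `dker ω Δ` of an
averaging kernel `ω` that do not refer to `ω`. -/
structure IsDiscreteKernel (w : ℤ → ℝ) : Prop where
  nonneg : ∀ k, 0 ≤ w k
  even : ∀ k, w (-k) = w k
  hasSum_one : HasSum w 1

namespace IsDiscreteKernel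

variable {a b C : ℝ}

lemma summable (hw : IsDiscreteKernel w) : Summable w := hw.hasSum_one.summable

lemma monotone_dconv (hw : IsDiscreteKernel w) (hf : Monotone f) (hfM : ∀ i, |f i| ≤ M) :
    Monotone (dconv f w) := by
  have hsummable (i : ℤ) : Summable fun k => w k * f (i - k) :=
    summable_mul_of_abs_le hw.summable fun k => hfM (i - k)
  intro i j hij
  rw [dconv_eq_tsum_mul_sub, dconv_eq_tsum_mul_sub]
  exact (hsummable i).tsum_le_tsum (fun k => mul_le_mul_of_nonneg_left
    (hf (sub_le_sub_right hij k)) (hw.nonneg k)) (hsummable j)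

lemma tendsto_dconv (hw : IsDiscreteKernel w) (hfM : ∀ i, |f i| ≤ M) {l : Filter ℤ}
    (hf : ∀ k : ℤ, Tendsto (fun i => f (i - k)) l (𝓝 a)) : Tendsto (dconv f w) l (𝓝 a) := by
  have hlim : Tendsto (fun i => ∑' k, w k * f (i - k)) l (𝓝 (∑' k, w k * a)) := by
    refine tendsto_tsum_of_dominated_convergence (hw.summable.mul_right M)
      (fun k => (hf k).const_mul (w k)) (Eventually.of_forall fun i k => ?_)
    rw [norm_mul, Real.norm_of_nonneg (hw.nonneg k)]
    exact mul_le_mul_of_nonneg_left (hfM _) (hw.nonneg k)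
  rw [tsum_mul_right, hw.hasSum_one.tsum_eq, one_mul] at hlim
  exact hlim.congr fun i => (dconv_eq_tsum_mul_sub f w i).symm

lemma isInterpolating_dconv (hw : IsDiscreteKernel w) (hf : IsInterpolating f a b) :
    IsInterpolating (dconv f w) a b where
  monotone := hw.monotone_dconv hf.monotone hf.abs_le
  tendsto_atBot := hw.tendsto_dconv hf.abs_le fun k =>
    hf.tendsto_atBot.comp (tendsto_atBot_add_const_right _ (-k) tendsto_id)
  tendsto_atTop := hw.tendsto_dconv hf.abs_le fun k =>
    hf.tendsto_atTop.comp (tendsto_atTop_add_const_right _ (-k) tendsto_id)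

lemma dconv_succ_sub_le (hw : IsDiscreteKernel w) (hwC : ∀ k, w k ≤ C)
    (hf : IsInterpolating f a b) (i : ℤ) :
    dconv f w (i + 1) - dconv f w i ≤ C * (b - a) := by
  have hsummable : Summable fun j => w (i - j) * (f (j + 1) - f j) := by
    simpa only [mul_comm] using summable_mul_of_abs_le hf.summable_sub fun j =>
      (abs_of_nonneg (hw.nonneg (i - j))).trans_le (hwC (i - j))
  rw [← dconv_succ_sub hw.summable hf.abs_le]
  exact hasSum_le (fun j => mul_le_mul_of_nonneg_right (hwC _) (hf.sub_nonneg j))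
    hsummable.hasSum (hf.hasSum_sub.mul_left C)

end IsDiscreteKernel

end Convolution

/-! ### Trapezoidal sums -/

section Trapezoidal

/-- The trapezoidal Riemann–Stieltjes sum of `∫ y ds` for lattice functions `s` and `y`. As a `tsum`
it is `0` when the series diverges; below `y` is bounded and `s` has summable increments. -/
def trapSum (s y : ℤ → ℝ) : ℝ := ∑' i, (s (i + 1) - s i) / 2 * (y i + y (i + 1))

variable {s y w : ℤ → ℝ} {a b c d : ℝ}

lemma trapSum_eq_half_tsum (s y : ℤ → ℝ) :
    trapSum s y = (∑' i, (s (i + 1) - s i) * (y i + y (i + 1))) / 2 := by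
  rw [trapSum, ← tsum_div_const]
  exact tsum_congr fun i => by ring

lemma abs_add_succ_le {M : ℝ} (hy : ∀ i, |y i| ≤ M) (i : ℤ) : |y i + y (i + 1)| ≤ M + M :=
  (abs_add_le _ _).trans (add_le_add (hy i) (hy (i + 1)))

lemma summable_trapSum {M : ℝ} (hs : Summable fun i => s (i + 1) - s i) (hy : ∀ i, |y i| ≤ M) :
    Summable fun i => (s (i + 1) - s i) / 2 * (y i + y (i + 1)) :=
  summable_mul_of_abs_le (hs.div_const 2) (abs_add_succ_le hy)

lemma trapSum_add_trapSum_swap (hs : IsInterpolating s a b) (hy : IsInterpolating y c d) :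
    trapSum s y + trapSum y s = b * d - a * c := by
  have hsum := (summable_trapSum hs.summable_sub hy.abs_le).hasSum.add
    (summable_trapSum hy.summable_sub hs.abs_le).hasSum
  have product_rule (i : ℤ) : (s (i + 1) - s i) / 2 * (y i + y (i + 1)) +
      (y (i + 1) - y i) / 2 * (s i + s (i + 1)) = s (i + 1) * y (i + 1) - s i * y i := by ring
  simp only [product_rule] at hsum
  exact hsum.unique <| hasSum_int_sub_of_summable (s := fun i => s i * y i) hsum.summable
    (hs.tendsto_atBot.mul hy.tendsto_atBot) (hs.tendsto_atTop.mul hy.tendsto_atTop)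

lemma trapSum_dconv_left {M N : ℝ} (hw : Summable w) (hw_even : ∀ k, w (-k) = w k)
    (hs : Summable fun i => s (i + 1) - s i) (hsM : ∀ i, |s i| ≤ M) (hy : ∀ i, |y i| ≤ N) :
    trapSum (dconv s w) y = trapSum s (dconv y w) := by
  rw [trapSum_eq_half_tsum, trapSum_eq_half_tsum]
  simp only [← dconv_succ_sub hw hsM, ← dconv_add_succ hw hy]
  rw [tsum_dconv_mul_eq_tsum_mul_dconv hw hw_even hs (abs_add_succ_le hy)]

lemma IsDiscreteKernel.trapSum_dconv_add_trapSum_dconv (hw : IsDiscreteKernel w)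
    (hs : IsInterpolating s a b) (hy : IsInterpolating y c d) :
    trapSum (dconv s w) y + trapSum (dconv y w) s = b * d - a * c := by
  rw [trapSum_dconv_left hw.summable hw.even hy.summable_sub hy.abs_le hs.abs_le,
    trapSum_add_trapSum_swap (hw.isInterpolating_dconv hs) hy]

end Trapezoidal

/-! ### The trapezoidal rule on an infinite partition -/

section Quadrature

variable {h : ℝ → ℝ} {a b M C : ℝ}

lemma abs_trapezoid_sub_integral_le (hh : ContDiffOn ℝ 2 h (Icc a b))
    (hM : ∀ u ∈ Icc a b, |iteratedDerivWithin 2 h (Icc a b) u| ≤ M) {x y : ℝ}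
    (hx : x ∈ Icc a b) (hy : y ∈ Icc a b) (hxy : x ≤ y) :
    |(y - x) / 2 * (h x + h y) - ∫ u in x..y, h u| ≤ (y - x) ^ 3 * M / 12 := by
  rcases hxy.eq_or_lt with rfl | hlt
  · simp
  have hsub : Icc x y ⊆ Icc a b := Icc_subset_Icc hx.1 hy.2
  have hab : a < b := (hx.1.trans_lt hlt).trans_le hy.2
  have hbound (u : ℝ) : |iteratedDerivWithin 2 h (Icc x y) u| ≤ M := by
    by_cases hu : u ∈ Icc x y
    · rw [iteratedDerivWithin_eq_iteratedFDerivWithin, iteratedFDerivWithin_subset hsub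
        (uniqueDiffOn_Icc hlt) (uniqueDiffOn_Icc hab) hh hu]
      exact hM u (hsub hu)
    · rw [iteratedDerivWithin_succ,
        derivWithin_zero_of_notMem_closure (by rwa [isClosed_Icc.closure_eq]), abs_zero]
      exact (abs_nonneg _).trans (hM x hx)
  rw [← uIcc_of_le hxy] at hsub hbound
  simpa [trapezoidal_error, trapezoidal_integral_one, abs_of_pos (sub_pos.2 hlt)] using
    trapezoidal_error_le_of_c2 (hh.mono hsub) hbound one_pos

namespace IsInterpolating

variable {s : ℤ → ℝ}

lemma hasSum_intervalIntegral (hs : IsInterpolating s a b) (hh : ContinuousOn h (Icc a b)) :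
    HasSum (fun i => ∫ u in s i..s (i + 1), h u) (∫ u in a..b, h u) := by
  have ha : a ∈ Icc a b := left_mem_Icc.2 hs.le
  have hb : b ∈ Icc a b := right_mem_Icc.2 hs.le
  have hint {x y : ℝ} (hx : x ∈ Icc a b) (hy : y ∈ Icc a b) : IntervalIntegrable h volume x y :=
    (hh.mono (uIcc_subset_Icc hx hy)).intervalIntegrable
  let primitive : ℝ → ℝ := fun x => ∫ u in a..x, h u
  have primitive_sub (i : ℤ) :
      primitive (s (i + 1)) - primitive (s i) = ∫ u in s i..s (i + 1), h u :=
    intervalIntegral.integral_interval_sub_left (hint ha (hs.mem_Icc _)) (hint ha (hs.mem_Icc _))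
  have hcont : ContinuousOn primitive (Icc a b) := by
    rw [← uIcc_of_le hs.le] at hh ⊢
    exact intervalIntegral.continuousOn_primitive_interval (hh.integrableOn_compact isCompact_uIcc)
  have tendsto_primitive {l : Filter ℤ} {x : ℝ} (hx : x ∈ Icc a b) (hl : Tendsto s l (𝓝 x)) :
      Tendsto (fun i => primitive (s i)) l (𝓝 (primitive x)) :=
    (hcont x hx).tendsto.comp
      (tendsto_nhdsWithin_iff.2 ⟨hl, Eventually.of_forall hs.mem_Icc⟩)
  have hsummable : Summable fun i => primitive (s (i + 1)) - primitive (s i) := by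
    obtain ⟨K, hK⟩ := isCompact_Icc.exists_bound_of_continuousOn hh
    refine (hs.summable_sub.mul_left K).of_norm_bounded fun i => ?_
    rw [primitive_sub, ← abs_of_nonneg (hs.sub_nonneg i)]
    exact intervalIntegral.norm_integral_le_of_norm_le_const fun u hu =>
      hK u (uIcc_subset_Icc (hs.mem_Icc i) (hs.mem_Icc _) (uIoc_subset_uIcc hu))
  have hsum := hasSum_int_sub_of_summable (s := fun i => primitive (s i)) hsummable
    (tendsto_primitive ha hs.tendsto_atBot) (tendsto_primitive hb hs.tendsto_atTop)
  have primitive_left : primitive a = 0 := intervalIntegral.integral_same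
  simpa only [primitive_sub, primitive_left, sub_zero] using hsum

theorem abs_trapSum_comp_sub_integral_le (hs : IsInterpolating s a b)
    (hC : ∀ i, s (i + 1) - s i ≤ C) (hh : ContDiffOn ℝ 2 h (Icc a b))
    (hM : ∀ u ∈ Icc a b, |iteratedDerivWithin 2 h (Icc a b) u| ≤ M) :
    |trapSum s (h ∘ s) - ∫ u in a..b, h u| ≤ M * C ^ 2 / 12 * (b - a) := by
  have hM_nonneg : 0 ≤ M := (abs_nonneg _).trans (hM a (left_mem_Icc.2 hs.le))
  have hcell (i : ℤ) : ‖(s (i + 1) - s i) / 2 * (h (s i) + h (s (i + 1))) -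
      ∫ u in s i..s (i + 1), h u‖ ≤ M * C ^ 2 / 12 * (s (i + 1) - s i) := by
    calc _ ≤ (s (i + 1) - s i) ^ 3 * M / 12 :=
          abs_trapezoid_sub_integral_le hh hM (hs.mem_Icc i) (hs.mem_Icc _)
            (_root_.sub_nonneg.1 (hs.sub_nonneg i))
      _ = M * (s (i + 1) - s i) ^ 2 / 12 * (s (i + 1) - s i) := by ring
      _ ≤ M * C ^ 2 / 12 * (s (i + 1) - s i) := by
          gcongr
          exacts [hs.sub_nonneg i, hs.sub_nonneg i, hC i]
  obtain ⟨K, hK⟩ := isCompact_Icc.exists_bound_of_continuousOn hh.continuousOn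
  have hintegral := hs.hasSum_intervalIntegral hh.continuousOn
  have hsum := (summable_trapSum (y := h ∘ s) hs.summable_sub fun i => hK _ (hs.mem_Icc i)).hasSum
  rw [trapSum, ← (hsum.sub hintegral).tsum_eq]
  exact tsum_of_norm_bounded (hs.hasSum_sub.mul_left (M * C ^ 2 / 12)) hcell

end IsInterpolating

/-- The supremum norm `‖h″‖∞` over `[0,1]`, with one-sided derivatives at the endpoints. As a real
`sSup` it is `0` if `h″` is unbounded. -/
def secondDerivSup (h : ℝ → ℝ) : ℝ :=
  sSup ((fun u => |iteratedDerivWithin 2 h (Icc 0 1) u|) '' Icc (0 : ℝ) 1)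

lemma secondDerivSup_nonneg (h : ℝ → ℝ) : 0 ≤ secondDerivSup h :=
  Real.sSup_nonneg <| forall_mem_image.2 fun _ _ => abs_nonneg _

lemma abs_iteratedDerivWithin_le_secondDerivSup (hh : ContDiffOn ℝ 2 h (Icc 0 1)) {u : ℝ}
    (hu : u ∈ Icc (0 : ℝ) 1) : |iteratedDerivWithin 2 h (Icc 0 1) u| ≤ secondDerivSup h := by
  have hcont : ContinuousOn (fun u => |iteratedDerivWithin 2 h (Icc 0 1) u|) (Icc 0 1) :=
    (hh.continuousOn_iteratedDerivWithin le_rfl (uniqueDiffOn_Icc zero_lt_one)).abs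
  exact le_csSup (isCompact_Icc.image_of_continuousOn hcont).bddAbove (mem_image_of_mem _ hu)

lemma IsDiscreteKernel.abs_trapSum_dconv_sub_integral_le {w F G : ℤ → ℝ}
    (hw : IsDiscreteKernel w) (hwC : ∀ k, w k ≤ C) (hG : IsInterpolating G 0 1)
    (hh : ContDiffOn ℝ 2 h (Icc 0 1)) (hF : ∀ i, F i = h (dconv G w i)) :
    |trapSum (dconv G w) F - ∫ u in (0 : ℝ)..1, h u| ≤ secondDerivSup h * C ^ 2 / 12 := by
  have hstep (i : ℤ) : dconv G w (i + 1) - dconv G w i ≤ C := by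
    simpa using hw.dconv_succ_sub_le hwC hG i
  have hcomp : F = h ∘ dconv G w := funext hF
  simpa [hcomp] using (hw.isInterpolating_dconv hG).abs_trapSum_comp_sub_integral_le hstep hh
    fun u => abs_iteratedDerivWithin_le_secondDerivSup hh

end Quadrature

/-! ### The potential -/

section Potential

variable {h : ℝ → ℝ}

lemma bddBelow_Xinv_set (h : ℝ → ℝ) (v : ℝ) :
    BddBelow ({1} ∪ {u ∈ Icc (0 : ℝ) 1 | v ≤ h u}) :=
  bddBelow_singleton.union ⟨0, fun _ hu => hu.1.1⟩

lemma Xinv_mem_Icc (h : ℝ → ℝ) (v : ℝ) : Xinv h v ∈ Icc (0 : ℝ) 1 := by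
  refine ⟨Real.sInf_nonneg ?_, csInf_le (bddBelow_Xinv_set h v) (by simp)⟩
  rintro u (rfl | hu)
  exacts [zero_le_one, hu.1.1]

lemma Xinv_le {u v : ℝ} (hu : u ∈ Icc (0 : ℝ) 1) (hv : v ≤ h u) : Xinv h v ≤ u :=
  csInf_le (bddBelow_Xinv_set h v) (Or.inr ⟨hu, hv⟩)

lemma monotone_Xinv (h : ℝ → ℝ) : Monotone (Xinv h) := fun v _ hv =>
  csInf_le_csInf (bddBelow_Xinv_set h v) ⟨1, by simp⟩
    (union_subset_union_right _ fun _ hu => ⟨hu.1, hv.trans hu.2⟩)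

namespace MemX

lemma Xinv_of_one_lt (hh : MemX h) {v : ℝ} (hv : 1 < v) : Xinv h v = 1 := by
  have hempty : {u ∈ Icc (0 : ℝ) 1 | v ≤ h u} = ∅ :=
    eq_empty_of_forall_notMem fun u hu => (hv.trans_le hu.2).not_ge (hh.2 hu.1).2
  rw [Xinv, hempty, union_empty, csInf_singleton]

lemma le_apply_of_Xinv_lt (hh : MemX h) {u v : ℝ} (hvu : Xinv h v < u) (hu : u < 1) :
    v ≤ h u := by
  obtain ⟨x, rfl | ⟨hx, hvx⟩, hxu⟩ := exists_lt_of_csInf_lt ⟨1, by simp⟩ hvu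
  · exact absurd hxu hu.not_gt
  · exact hvx.trans (hh.1 hx ⟨hx.1.trans hxu.le, hu.le⟩ hxu.le)

lemma measureReal_superlevel (hh : MemX h) (v : ℝ) :
    (volume.restrict (Icc (0 : ℝ) 1)).real {u | v ≤ h u} = 1 - Xinv h v := by
  have hX := Xinv_mem_Icc h v
  have hupper : {u | v ≤ h u} ∩ Icc 0 1 ⊆ Icc (Xinv h v) 1 := fun u hu =>
    ⟨Xinv_le hu.2 hu.1, hu.2.2⟩
  have hlower : Ioo (Xinv h v) 1 ⊆ {u | v ≤ h u} ∩ Icc 0 1 := fun u hu =>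
    ⟨hh.le_apply_of_Xinv_lt hu.1 hu.2, hX.1.trans hu.1.le, hu.2.le⟩
  rw [measureReal_restrict_apply' measurableSet_Icc]
  apply le_antisymm
  · simpa [hX.2] using measureReal_mono hupper (by simp) (μ := volume)
  · simpa [hX.2] using
      measureReal_mono hlower (measure_ne_top_of_subset hupper (by simp)) (μ := volume)

lemma integrableOn (hh : MemX h) : IntegrableOn h (Icc 0 1) :=
  hh.1.integrableOn_isCompact isCompact_Icc

lemma integral_Xinv (hh : MemX h) :
    ∫ v in (0 : ℝ)..1, Xinv h v = 1 - ∫ u in (0 : ℝ)..1, h u := by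
  have h_nonneg : 0 ≤ᵐ[volume.restrict (Icc (0 : ℝ) 1)] h :=
    (ae_restrict_iff' measurableSet_Icc).2 <| Eventually.of_forall fun u hu => (hh.2 hu).1
  have hvanish : ∀ v ∈ Ioi (0 : ℝ) \ Ioc 0 1, 1 - Xinv h v = 0 := fun v hv => by
    rw [hh.Xinv_of_one_lt (not_le.1 fun hv1 => hv.2 ⟨hv.1, hv1⟩), sub_self]
  have hlayer : ∫ u in (0 : ℝ)..1, h u = 1 - ∫ v in (0 : ℝ)..1, Xinv h v := by
    calc ∫ u in (0 : ℝ)..1, h u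
        = ∫ u in Icc (0 : ℝ) 1, h u := by
          rw [intervalIntegral.integral_of_le zero_le_one, integral_Icc_eq_integral_Ioc]
      _ = ∫ v in Ioi (0 : ℝ), (1 - Xinv h v) := by
          simp only [hh.integrableOn.integral_eq_integral_meas_le h_nonneg,
            hh.measureReal_superlevel]
      _ = ∫ v in (0 : ℝ)..1, (1 - Xinv h v) := by
          rw [setIntegral_eq_of_subset_of_forall_sdiff_eq_zero measurableSet_Ioi
            Ioc_subset_Ioi_self hvanish, intervalIntegral.integral_of_le zero_le_one]
      _ = 1 - ∫ v in (0 : ℝ)..1, Xinv h v := by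
          rw [intervalIntegral.integral_sub intervalIntegrable_const
            (monotone_Xinv h).intervalIntegrable]
          simp
  rw [hlayer, sub_sub_cancel]

end MemX

lemma Agap_eq_one_sub_integral_sub_integral {hf hg : ℝ → ℝ} (hhf : MemX hf) (hhg : MemX hg) :
    Agap hf hg = 1 - (∫ u in (0 : ℝ)..1, hf u) - ∫ u in (0 : ℝ)..1, hg u := by
  rw [Agap, Pot, hhf.integral_Xinv, hhg.integral_Xinv]
  ring

end Potential

/-! ### Discretized averaging kernels -/

namespace IsAveragingKernel

variable {ω : ℝ → ℝ} {Δ : ℝ}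

lemma integrable (hω : IsAveragingKernel ω) : Integrable ω := hω.2.2.2.1

lemma memLp_top (hω : IsAveragingKernel ω) : MemLp ω ⊤ volume := by
  refine memLp_top_of_bound hω.integrable.aestronglyMeasurable
    (‖ω 0‖ + (eVariationOn ω univ).toReal) (Eventually.of_forall fun x => ?_)
  calc ‖ω x‖ ≤ ‖ω 0‖ + dist (ω x) (ω 0) := by
        rw [dist_eq_norm]; exact norm_le_norm_add_norm_sub' _ _
    _ ≤ ‖ω 0‖ + (eVariationOn ω univ).toReal := by
        gcongr; exact hω.2.2.1.dist_le (mem_univ _) (mem_univ _)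

lemma ae_le_kerSup (hω : IsAveragingKernel ω) : ∀ᵐ x, ω x ≤ kerSup ω := by
  rw [kerSup, toReal_eLpNorm hω.memLp_top.aestronglyMeasurable]
  filter_upwards [ae_le_lpNorm_exponent_top hω.memLp_top] with x hx
  exact (Real.le_norm_self _).trans hx

lemma dker_le (hω : IsAveragingKernel ω) (hΔ : 0 ≤ Δ) (i : ℤ) :
    dker ω Δ i ≤ kerSup ω * Δ := by
  calc dker ω Δ i
      ≤ ∫ _ in ((i : ℝ) - 1 / 2) * Δ..((i : ℝ) + 1 / 2) * Δ, kerSup ω :=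
        intervalIntegral.integral_mono_ae (by gcongr; linarith)
          hω.integrable.intervalIntegrable intervalIntegrable_const hω.ae_le_kerSup
    _ = kerSup ω * Δ := by rw [intervalIntegral.integral_const, smul_eq_mul]; ring

lemma dker_neg (hω : IsAveragingKernel ω) (Δ : ℝ) (i : ℤ) : dker ω Δ (-i) = dker ω Δ i := by
  have hreflect := intervalIntegral.integral_comp_neg (a := ((i : ℝ) - 1 / 2) * Δ)
    (b := ((i : ℝ) + 1 / 2) * Δ) ω
  simp only [hω.1] at hreflect
  rw [dker, dker, hreflect]
  congr 1 <;> push_cast <;> ring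

lemma hasSum_dker (hω : IsAveragingKernel ω) (hΔ : 0 < Δ) : HasSum (dker ω Δ) 1 := by
  have hcell (i : ℤ) :
      Δ * ∫ x in -(1 / 2) + (i : ℝ)..-(1 / 2) + i + 1, ω (x * Δ) = dker ω Δ i := by
    rw [intervalIntegral.mul_integral_comp_mul_right, dker]
    congr 1 <;> ring
  have hmass : Δ * ∫ x, ω (x * Δ) = 1 := by
    rw [Measure.integral_comp_mul_right, hω.2.2.2.2, abs_of_pos (inv_pos.2 hΔ), smul_eq_mul,
      mul_one, mul_inv_cancel₀ hΔ.ne']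
  have hscaled := (hω.integrable.comp_mul_right' hΔ.ne').hasSum_intervalIntegral (-(1 / 2))
  simpa only [hcell, hmass] using hscaled.mul_left Δ

lemma isDiscreteKernel_dker (hω : IsAveragingKernel ω) (hΔ : 0 < Δ) :
    IsDiscreteKernel (dker ω Δ) where
  nonneg _ := intervalIntegral.integral_nonneg (by gcongr; linarith) fun x _ => hω.2.1 x
  even := hω.dker_neg Δ
  hasSum_one := hω.hasSum_dker hΔ

end IsAveragingKernel

theorem discrete_fixed_point_bound_C2_general {w : ℤ → ℝ} {C : ℝ} (hw : IsDiscreteKernel w)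
    (hwC : ∀ k, w k ≤ C) {hf hg : ℝ → ℝ} (hhf : MemX hf) (hhg : MemX hg)
    (hfC2 : ContDiffOn ℝ 2 hf (Icc 0 1)) (hgC2 : ContDiffOn ℝ 2 hg (Icc 0 1))
    {F G : ℤ → ℝ} (hF : IsInterpolating F 0 1) (hG : IsInterpolating G 0 1)
    (hfixG : ∀ i, G i = hg (dconv F w i)) (hfixF : ∀ i, F i = hf (dconv G w i)) :
    |Agap hf hg| ≤ (1 / 12) * (secondDerivSup hf + secondDerivSup hg) * C ^ 2 := by
  have htotal : trapSum (dconv G w) F + trapSum (dconv F w) G = 1 := by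
    simpa using hw.trapSum_dconv_add_trapSum_dconv hG hF
  have hAgap : Agap hf hg = (trapSum (dconv G w) F - ∫ u in (0 : ℝ)..1, hf u) +
      (trapSum (dconv F w) G - ∫ u in (0 : ℝ)..1, hg u) := by
    rw [Agap_eq_one_sub_integral_sub_integral hhf hhg, ← htotal]
    ring
  calc |Agap hf hg|
      ≤ |trapSum (dconv G w) F - ∫ u in (0 : ℝ)..1, hf u| +
          |trapSum (dconv F w) G - ∫ u in (0 : ℝ)..1, hg u| := hAgap ▸ abs_add_le _ _
    _ ≤ secondDerivSup hf * C ^ 2 / 12 + secondDerivSup hg * C ^ 2 / 12 :=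
        add_le_add (hw.abs_trapSum_dconv_sub_integral_le hwC hG hfC2 hfixF)
          (hw.abs_trapSum_dconv_sub_integral_le hwC hF hgC2 hfixG)
    _ = (1 / 12) * (secondDerivSup hf + secondDerivSup hg) * C ^ 2 := by ring

/-- **C² discrete fixed point bound.** -/
theorem discrete_fixed_point_bound_C2
    (ω hf hg : ℝ → ℝ) (Δ : ℝ) (hΔ : 0 < Δ)
    (hω : IsAveragingKernel ω) (hhf : MemX hf) (hhg : MemX hg)
    (hfC2 : ContDiffOn ℝ 2 hf (Icc 0 1)) (hgC2 : ContDiffOn ℝ 2 hg (Icc 0 1))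
    (F G : ℤ → ℝ) (hFmono : Monotone F) (hGmono : Monotone G)
    (hFrange : ∀ i, F i ∈ Icc (0:ℝ) 1) (hGrange : ∀ i, G i ∈ Icc (0:ℝ) 1)
    (hFbot : Filter.Tendsto F Filter.atBot (nhds 0))
    (hFtop : Filter.Tendsto F Filter.atTop (nhds 1))
    (hGbot : Filter.Tendsto G Filter.atBot (nhds 0))
    (hGtop : Filter.Tendsto G Filter.atTop (nhds 1))
    (hfixG : ∀ i, G i = hg (dconv F (dker ω Δ) i))
    (hfixF : ∀ i, F i = hf (dconv G (dker ω Δ) i)) :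
    |Agap hf hg| ≤ (1/2) *
        (sSup ((fun u => |iteratedDerivWithin 2 hf (Icc 0 1) u|) '' Icc (0:ℝ) 1) +
          sSup ((fun u => |iteratedDerivWithin 2 hg (Icc 0 1) u|) '' Icc (0:ℝ) 1)) *
        (kerSup ω) ^ 2 * Δ ^ 2 := by
  calc |Agap hf hg|
      ≤ (1 / 12) * (secondDerivSup hf + secondDerivSup hg) * (kerSup ω * Δ) ^ 2 :=
        discrete_fixed_point_bound_C2_general (hω.isDiscreteKernel_dker hΔ) (hω.dker_le hΔ.le)
          hhf hhg hfC2 hgC2 ⟨hFmono, hFbot, hFtop⟩ ⟨hGmono, hGbot, hGtop⟩ hfixG hfixF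
    _ ≤ (1 / 2) * (secondDerivSup hf + secondDerivSup hg) * (kerSup ω * Δ) ^ 2 := by
        gcongr
        · exact add_nonneg (secondDerivSup_nonneg hf) (secondDerivSup_nonneg hg)
        · norm_num
    _ = _ := by rw [mul_pow, ← mul_assoc]; rfl
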